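/- Let P ∈ ℂ[X₁,…,Xₙ] be a homogeneous polynomial of degree d and let a ∈ ℝⁿ ∖ ℤⁿ. Then the function f_a(s) := Σ'_{k∈ℤⁿ} (P(k)/|k|^s) e^{2πi k·a}, which converges for Re(s) > d + n, extends holomorphically to the whole complex plane ℂ. -/

import Mathlib

open Filter Topology

noncomputable section

/-- Euclidean norm of an integer vector `k ∈ ℤⁿ`. -/
def znorm {n : ℕ} (k : Fin n → ℤ) : ℝ := Real.sqrt (∑ i, ((k i : ℝ)) ^ 2)

/-- The general term of the twisted series
`f_a(s) = Σ'_{k∈ℤⁿ} (P(k)/|k|^s) e^{2πi k·a}`, with the term at `k = 0` omitted. -/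
def fTerm {n : ℕ} (P : MvPolynomial (Fin n) ℂ) (a : Fin n → ℝ) (s : ℂ) (k : Fin n → ℤ) : ℂ :=
  if k = 0 then 0 else
    MvPolynomial.eval (fun i => ((k i : ℤ) : ℂ)) P / ((znorm k : ℂ) ^ s) *
      Complex.exp (2 * (Real.pi : ℂ) * Complex.I * ((∑ i, (k i : ℝ) * a i : ℝ) : ℂ))

/-!
Let `χ` be a character of an abelian group with `χ v ≠ 1`. Summation by parts gives
`∑ χ(k) (Δ_v F)(k) = (χ(-v) - 1) ∑ χ(k) F(k)`, so up to a nonzero constant the twisted sum of `F`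
is the twisted sum of any iterated difference `Δ_v^N F`. For `F(k) = P(k) |k|^{-s}` on the lattice,
the function `F` extends holomorphically to complex balls around `k` of radius proportional to
`|k|`, with a comparable bound there, and by the Schwarz lemma each difference gains a factor
`|k|^{-1}`. The twisted sum of `Δ_v^N F` therefore converges for `Re s > deg P + n - N`, and these
continuations to larger and larger half-planes agree on their common domains.
-/

open Set Metric
open scoped fwdDiff

section ForwardDifference

lemma fwdDiff_iter_comp_addMonoidHom {M M' G : Type*} [AddCommMonoid M] [AddCommMonoid M']
    [AddCommGroup G] (φ : M →+ M') (f : M' → G) (h : M) (N : ℕ) (x : M) :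
    (Δ_[h])^[N] (f ∘ φ) x = (Δ_[φ h])^[N] f (φ x) := by
  simp [fwdDiff_iter_eq_sum_shift]

lemma differentiable_fwdDiff_iter {𝕜 E M F : Type*} [NontriviallyNormedField 𝕜]
    [NormedAddCommGroup E] [NormedSpace 𝕜 E] [NormedAddCommGroup F] [NormedSpace 𝕜 F]
    [AddCommMonoid M] {f : E → M → F} (hf : ∀ k, Differentiable 𝕜 (f · k)) (h : M) (N : ℕ)
    (k : M) : Differentiable 𝕜 fun x => (Δ_[h])^[N] (f x) k := by
  induction N generalizing k with
  | zero => exact hf k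
  | succ N ih =>
    simp only [Function.iterate_succ_apply', fwdDiff]
    exact (ih _).sub (ih _)

lemma hasSum_addChar_smul_fwdDiff {G R E : Type*} [AddCommGroup G] [Ring R] [AddCommGroup E]
    [Module R E] [TopologicalSpace E] [IsTopologicalAddGroup E] [ContinuousConstSMul R E]
    (χ : AddChar G R) (v : G) {f : G → E} {S : E} (hf : HasSum (fun k => χ k • f k) S) :
    HasSum (fun k => χ k • Δ_[v] f k) ((χ (-v) - 1) • S) := by
  have hshift : HasSum (fun k => χ (-v) • χ (k + v) • f (k + v)) (χ (-v) • S) :=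
    ((Equiv.addRight v).hasSum_iff.2 hf).const_smul _
  have hterm (k : G) : χ (-v) * χ (k + v) = χ k := by
    rw [← AddChar.map_add_eq_mul, neg_add_cancel_comm_assoc]
  simpa only [fwdDiff, smul_sub, sub_smul, one_smul, smul_smul, hterm] using hshift.sub hf

variable {E F : Type*} [NormedAddCommGroup E] [NormedSpace ℂ E] [NormedAddCommGroup F]
  [NormedSpace ℂ F] {f : E → F} {c v : E} {R r M : ℝ}

lemma differentiableOn_fwdDiff_ball (hf : DifferentiableOn ℂ f (ball c R)) (hv : ‖v‖ < r) :
    DifferentiableOn ℂ (Δ_[v] f) (ball c (R - r)) := by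
  have hmaps : MapsTo (· + v) (ball c (R - r)) (ball c R) := fun z hz => by
    rw [mem_ball_iff_norm] at hz ⊢
    rw [add_sub_right_comm]
    linarith [norm_add_le (z - c) v]
  exact (hf.comp (differentiableOn_id.add_const v) hmaps).sub
    (hf.mono (ball_subset_ball (by linarith [norm_nonneg v])))

lemma norm_fwdDiff_le_of_forall_mem_ball (hf : DifferentiableOn ℂ f (ball c R))
    (hM : ∀ z ∈ ball c R, ‖f z‖ ≤ M) (hv : ‖v‖ < r) {z : E} (hz : z ∈ ball c (R - r)) :
    ‖Δ_[v] f z‖ ≤ M * (2 * ‖v‖ / r) := by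
  have hr : 0 < r := (norm_nonneg v).trans_lt hv
  have hball : ball z r ⊆ ball c R :=
    ball_subset_ball' (by linarith [mem_ball.1 hz])
  have hmaps : MapsTo f (ball z r) (closedBall (f z) (2 * M)) := fun w hw => by
    rw [mem_closedBall_iff_norm]
    linarith [norm_sub_le (f w) (f z), hM w (hball hw), hM z (hball (mem_ball_self hr))]
  have hschwarz := Complex.dist_le_div_mul_dist_of_mapsTo_ball (hf.mono hball) hmaps
    (show z + v ∈ ball z r by simpa using hv)
  calc ‖Δ_[v] f z‖ = dist (f (z + v)) (f z) := (dist_eq_norm _ _).symm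
    _ ≤ 2 * M / r * dist (z + v) z := hschwarz
    _ = M * (2 * ‖v‖ / r) := by rw [dist_self_add_left]; ring

lemma norm_fwdDiff_iter_le_of_forall_mem_ball (N : ℕ) (hf : DifferentiableOn ℂ f (ball c R))
    (hM : ∀ z ∈ ball c R, ‖f z‖ ≤ M) (hv : ‖v‖ < r) {z : E} (hz : z ∈ ball c (R - N * r)) :
    ‖(Δ_[v])^[N] f z‖ ≤ M * (2 * ‖v‖ / r) ^ N := by
  induction N generalizing f R M with
  | zero => simpa using hM z (by simpa using hz)
  | succ N ih =>
    have hz' : z ∈ ball c (R - r - N * r) := by convert hz using 2; push_cast; ring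
    rw [Function.iterate_succ_apply, pow_succ', ← mul_assoc]
    exact ih (differentiableOn_fwdDiff_ball hf hv)
      (fun w hw => norm_fwdDiff_le_of_forall_mem_ball hf hM hv hw) hz'

end ForwardDifference

section Continuation

lemma exists_differentiable_eqOn_of_iUnion {𝕜 E F : Type*} [NontriviallyNormedField 𝕜]
    [NormedAddCommGroup E] [NormedSpace 𝕜 E] [NormedAddCommGroup F] [NormedSpace 𝕜 F]
    {U : ℕ → Set E} {f : ℕ → E → F} (hopen : ∀ N, IsOpen (U N)) (hmono : Monotone U)
    (hcover : ⋃ N, U N = univ) (hdiff : ∀ N, DifferentiableOn 𝕜 (f N) (U N))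
    (hglue : ∀ N, EqOn (f (N + 1)) (f N) (U N)) :
    ∃ g, Differentiable 𝕜 g ∧ ∀ N, EqOn g (f N) (U N) := by
  have heq {N M : ℕ} (hNM : N ≤ M) : EqOn (f M) (f N) (U N) := by
    induction M, hNM using Nat.le_induction with
    | base => exact eqOn_refl _ _
    | succ M hNM ih => exact ((hglue M).mono (hmono hNM)).trans ih
  choose index hindex using iUnion_eq_univ_iff.1 hcover
  have hg (N : ℕ) : EqOn (fun x => f (index x) x) (f N) (U N) := fun x hx =>
    (le_total (index x) N).elim (fun h => (heq h (hindex x)).symm) (fun h => heq h hx)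
  refine ⟨_, fun x => ?_, hg⟩
  have hx := (hopen _).mem_nhds (hindex x)
  exact ((hdiff _).differentiableAt hx).congr_of_eventuallyEq ((hg _).eventuallyEq_of_mem hx)

theorem exists_differentiable_hasSum_addChar_smul {G E : Type*} [AddCommGroup G]
    [NormedAddCommGroup E] [NormedSpace ℂ E] [CompleteSpace E] (χ : AddChar G ℂ) {v : G}
    (hv : χ v ≠ 1) {F : ℂ → G → E} (hF : ∀ k, Differentiable ℂ (F · k)) {σ : ℝ}
    (hsum : ∀ N : ℕ, SummableLocallyUniformlyOn (fun k s => χ k • (Δ_[v])^[N] (F s) k)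
      {s | σ - N < s.re}) :
    ∃ g : ℂ → E, Differentiable ℂ g ∧
      ∀ s : ℂ, σ < s.re → HasSum (fun k => χ k • F s k) (g s) := by
  have hopen (N : ℕ) : IsOpen {s : ℂ | σ - N < s.re} := isOpen_lt (by fun_prop) (by fun_prop)
  have hmono : Monotone fun N : ℕ => {s : ℂ | σ - N < s.re} := fun N M hNM s hs =>
    (sub_le_sub_left (Nat.cast_le.2 hNM) σ).trans_lt hs
  have hcover : ⋃ N : ℕ, {s : ℂ | σ - N < s.re} = univ := iUnion_eq_univ_iff.2 fun s =>
    (exists_nat_gt (σ - s.re)).imp fun N hN => sub_lt_comm.1 hN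
  have hmul : χ (-v) - 1 ≠ 0 := sub_ne_zero.2 (by simpa [AddChar.map_neg_eq_inv] using hv)
  obtain ⟨g, hg, hgeq⟩ := exists_differentiable_eqOn_of_iUnion (𝕜 := ℂ)
    (f := fun N s => ((χ (-v) - 1) ^ N)⁻¹ • ∑' k, χ k • (Δ_[v])^[N] (F s) k) hopen hmono hcover
    (fun N => ((hsum N).differentiableOn (hopen N) fun k s _ =>
      ((differentiable_fwdDiff_iter hF v N k).const_smul (χ k)) s).const_smul _)
    fun N s hs => by
      have hparts := hasSum_addChar_smul_fwdDiff χ v ((hsum N).summable hs).hasSum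
      simp only [Function.iterate_succ_apply', hparts.tsum_eq, smul_smul, pow_succ]
      field_simp
  refine ⟨g, hg, fun s hs => ?_⟩
  have hs₀ : s ∈ {s : ℂ | σ - (0 : ℕ) < s.re} := by simpa using hs
  simpa [hgeq 0 hs₀] using ((hsum 0).summable hs₀).hasSum

end Continuation

section Lattice

variable {ι : Type*} [Fintype ι]

lemma norm_intCast_comp (k : ι → ℤ) : ‖fun i => (k i : ℝ)‖ = ‖k‖ := by
  simp only [Pi.norm_def]
  rfl

lemma summable_norm_rpow_int_pi {r : ℝ} (hr : r < -Fintype.card ι) :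
    Summable fun k : ι → ℤ => ‖k‖ ^ r := by
  classical
  set b := (Pi.basisFun ℝ ι).restrictScalars ℤ
  have hcoe (k : ι → ℤ) : (b.equivFun.symm k : ι → ℝ) = fun i => (k i : ℝ) := by
    ext i
    simp [b, Module.Basis.equivFun_symm_apply, Pi.basisFun_apply, Pi.single_apply]
  have hnorm (k : ι → ℤ) : ‖b.equivFun.symm k‖ = ‖k‖ := by
    rw [Submodule.coe_norm, hcoe, norm_intCast_comp]
  have hsum := ZLattice.summable_norm_rpow (Submodule.span ℤ (range (Pi.basisFun ℝ ι))) r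
    (by rw [ZLattice.rank ℝ]; simpa using hr)
  exact ((b.equivFun.symm.toEquiv.summable_iff).2 hsum).congr fun k => by
    rw [← hnorm]; rfl

lemma tendsto_norm_int_pi_cofinite_atTop :
    Tendsto (fun k : ι → ℤ => ‖k‖) cofinite atTop := by
  rw [← cocompact_eq_cofinite]
  exact tendsto_norm_cocompact_atTop

/-- The character `k ↦ e^{2πi k·a}` of the lattice `ℤ^ι`. -/
def latticeChar (a : ι → ℝ) : AddChar (ι → ℤ) ℂ where
  toFun k := Real.fourierChar (∑ i, (k i : ℝ) * a i)
  map_zero_eq_one' := by simp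
  map_add_eq_mul' k l := by simp [add_mul, Finset.sum_add_distrib, AddChar.map_add_eq_mul]

lemma norm_latticeChar (a : ι → ℝ) (k : ι → ℤ) : ‖latticeChar a k‖ = 1 := Circle.norm_coe _

lemma fourierChar_eq_one_iff {x : ℝ} : Real.fourierChar x = 1 ↔ ∃ m : ℤ, x = m := by
  rw [Real.fourierChar_apply', Circle.exp_eq_one]
  refine exists_congr fun m => ?_
  rw [mul_comm (m : ℝ), mul_right_inj' Real.two_pi_pos.ne']

lemma exists_latticeChar_ne_one {a : ι → ℝ} (ha : ¬ ∀ i, ∃ m : ℤ, a i = m) :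
    ∃ v, latticeChar a v ≠ 1 := by
  classical
  obtain ⟨j, hj⟩ := not_forall.1 ha
  refine ⟨Pi.single j 1, fun h => hj (fourierChar_eq_one_iff.1 (Circle.ext ?_))⟩
  simpa [latticeChar, Pi.single_apply] using h

end Lattice

section Symbol

lemma norm_eval_le_of_norm_le {σ R : Type*} [NormedCommRing R] [NormOneClass R]
    (P : MvPolynomial σ R) {x : σ → R} {r : ℝ} (hr : 1 ≤ r) (hx : ∀ i, ‖x i‖ ≤ r) :
    ‖MvPolynomial.eval x P‖ ≤ (∑ m ∈ P.support, ‖P.coeff m‖) * r ^ P.totalDegree := by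
  rw [MvPolynomial.eval_eq, Finset.sum_mul]
  refine (norm_sum_le _ _).trans (Finset.sum_le_sum fun m hm => (norm_mul_le _ _).trans ?_)
  gcongr
  calc ‖∏ i ∈ m.support, x i ^ m i‖ ≤ ∏ i ∈ m.support, r ^ m i :=
        (Finset.norm_prod_le _ _).trans <| Finset.prod_le_prod (fun _ _ => norm_nonneg _)
          fun i _ => (norm_pow_le _ _).trans (pow_le_pow_left₀ (norm_nonneg _) (hx i) _)
    _ = r ^ m.sum fun _ e => e := Finset.prod_pow_eq_pow_sum _ _ _
    _ ≤ r ^ P.totalDegree := pow_le_pow_right₀ hr (MvPolynomial.le_totalDegree hm)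

lemma norm_cpow_le_of_norm_mem_Icc {w : ℂ} (c : ℂ) {A t : ℝ} (hA : 1 ≤ A) (ht : 0 < t)
    (hw : ‖w‖ ∈ Icc (t / A) (A * t)) :
    ‖w ^ c‖ ≤ (A * Real.exp Real.pi) ^ ‖c‖ * t ^ c.re := by
  have hA₀ : 0 < A := one_pos.trans_le hA
  have hw₀ : 0 < ‖w‖ := (div_pos ht hA₀).trans_le hw.1
  have hrpow : ‖w‖ ^ c.re ≤ A ^ |c.re| * t ^ c.re := by
    rcases le_total 0 c.re with hc | hc
    · rw [abs_of_nonneg hc, ← Real.mul_rpow hA₀.le ht.le]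
      exact Real.rpow_le_rpow hw₀.le hw.2 hc
    · rw [abs_of_nonpos hc, Real.rpow_neg hA₀.le, inv_mul_eq_div, ← Real.div_rpow ht.le hA₀.le]
      exact Real.rpow_le_rpow_of_nonpos (div_pos ht hA₀) hw.1 hc
  have harg : -(w.arg * c.im) ≤ Real.pi * ‖c‖ :=
    calc -(w.arg * c.im) ≤ |w.arg| * |c.im| := by rw [← abs_mul]; exact neg_le_abs _
      _ ≤ Real.pi * ‖c‖ := by gcongr; exacts [Complex.abs_arg_le_pi w, Complex.abs_im_le_norm c]
  calc ‖w ^ c‖ ≤ ‖w‖ ^ c.re * Real.exp (-(w.arg * c.im)) := by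
        rw [Real.exp_neg, ← div_eq_mul_inv]; exact Complex.norm_cpow_le w c
    _ ≤ (A ^ ‖c‖ * t ^ c.re) * Real.exp (Real.pi * ‖c‖) := by
        gcongr
        exact hrpow.trans (by gcongr; exact Complex.abs_re_le_norm c)
    _ = (A * Real.exp Real.pi) ^ ‖c‖ * t ^ c.re := by
        rw [Real.mul_rpow hA₀.le (Real.exp_pos _).le, ← Real.exp_mul]; ring

variable {ι : Type*} [Fintype ι]

lemma norm_dotProduct_le {R : Type*} [NonUnitalSeminormedRing R] (x y : ι → R) :
    ‖x ⬝ᵥ y‖ ≤ Fintype.card ι * ‖x‖ * ‖y‖ :=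
  calc ‖x ⬝ᵥ y‖ ≤ ∑ _i : ι, ‖x‖ * ‖y‖ := norm_sum_le_of_le _ fun i _ =>
        (norm_mul_le _ _).trans (by gcongr <;> exact norm_le_pi_norm _ i)
    _ = Fintype.card ι * ‖x‖ * ‖y‖ := by simp [mul_assoc]

lemma sq_norm_le_dotProduct_self (y : ι → ℝ) : ‖y‖ ^ 2 ≤ y ⬝ᵥ y := by
  have hself : 0 ≤ y ⬝ᵥ y := Finset.sum_nonneg fun i _ => mul_self_nonneg _
  rw [← Real.le_sqrt (norm_nonneg y) hself, pi_norm_le_iff_of_nonneg (Real.sqrt_nonneg _)]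
  intro i
  refine Real.abs_le_sqrt ?_
  rw [sq]
  exact Finset.single_le_sum (f := fun i => y i * y i) (fun i _ => mul_self_nonneg _)
    (Finset.mem_univ i)

lemma norm_dotProduct_self_sub_le {R : Type*} [SeminormedCommRing R] (x y : ι → R) :
    ‖x ⬝ᵥ x - y ⬝ᵥ y‖ ≤ Fintype.card ι * ‖x - y‖ * ‖x + y‖ := by
  have hfactor : x ⬝ᵥ x - y ⬝ᵥ y = (x - y) ⬝ᵥ (x + y) := by
    simp only [sub_dotProduct, dotProduct_add, dotProduct_comm y x]
    abel
  rw [hfactor]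
  exact norm_dotProduct_le _ _

lemma norm_dotProduct_self_sub_le_of_mem_ball {R : Type*} [SeminormedCommRing R] {x y : ι → R}
    (hx : x ∈ ball y ((6 * ((Fintype.card ι : ℝ) + 1))⁻¹ * ‖y‖)) :
    ‖x ⬝ᵥ x - y ⬝ᵥ y‖ ≤ ‖y‖ ^ 2 / 2 := by
  set δ : ℝ := (6 * ((Fintype.card ι : ℝ) + 1))⁻¹
  have hδ : Fintype.card ι * δ ≤ 1 / 6 := by simp only [δ]; field_simp; linarith
  have hδ₁ : δ ≤ 1 := inv_le_one_of_one_le₀ (by norm_cast; lia)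
  have hsub : ‖x - y‖ ≤ δ * ‖y‖ := (mem_ball_iff_norm.1 hx).le
  have hadd : ‖x + y‖ ≤ 3 * ‖y‖ :=
    calc ‖x + y‖ = ‖(x - y) + (y + y)‖ := by congr 1; abel
      _ ≤ δ * ‖y‖ + (‖y‖ + ‖y‖) := norm_add_le_of_le hsub (norm_add_le _ _)
      _ ≤ 3 * ‖y‖ := by nlinarith [norm_nonneg y]
  calc ‖x ⬝ᵥ x - y ⬝ᵥ y‖ ≤ Fintype.card ι * ‖x - y‖ * ‖x + y‖ := norm_dotProduct_self_sub_le x y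
    _ ≤ Fintype.card ι * (δ * ‖y‖) * (3 * ‖y‖) := by gcongr
    _ = Fintype.card ι * δ * (3 * ‖y‖ ^ 2) := by ring
    _ ≤ 1 / 6 * (3 * ‖y‖ ^ 2) := by gcongr
    _ = ‖y‖ ^ 2 / 2 := by ring

lemma norm_ofReal_comp (y : ι → ℝ) : ‖Complex.ofReal ∘ y‖ = ‖y‖ := by
  simp [Pi.norm_def]

lemma ofReal_comp_dotProduct_self (y : ι → ℝ) :
    (Complex.ofReal ∘ y) ⬝ᵥ (Complex.ofReal ∘ y) = ((y ⬝ᵥ y : ℝ) : ℂ) :=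
  (RingHom.map_dotProduct Complex.ofRealHom y y).symm

variable (ι) in
lemma exists_dotProduct_self_mem_of_mem_ball : ∃ δ > 0, ∃ A ≥ 1, ∀ (y : ι → ℝ) (x : ι → ℂ),
    x ∈ ball (Complex.ofReal ∘ y) (δ * ‖y‖) →
      x ⬝ᵥ x ∈ Complex.slitPlane ∧ ‖x ⬝ᵥ x‖ ∈ Icc (‖y‖ ^ 2 / A) (A * ‖y‖ ^ 2) := by
  refine ⟨(6 * ((Fintype.card ι : ℝ) + 1))⁻¹, by positivity, Fintype.card ι + 2, ?_,
    fun y x hx => ?_⟩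
  · norm_cast; lia
  have hy : 0 < ‖y‖ := pos_of_mul_pos_right (pos_of_mem_ball hx) (by positivity)
  have hclose : ‖x ⬝ᵥ x - (y ⬝ᵥ y : ℝ)‖ ≤ ‖y‖ ^ 2 / 2 := by
    rw [← ofReal_comp_dotProduct_self, ← norm_ofReal_comp]
    exact norm_dotProduct_self_sub_le_of_mem_ball (by rwa [norm_ofReal_comp])
  have hupper : ‖((y ⬝ᵥ y : ℝ) : ℂ)‖ ≤ Fintype.card ι * ‖y‖ ^ 2 := by
    simpa [sq, mul_assoc] using norm_dotProduct_le y y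
  have hre : ‖y‖ ^ 2 / 2 ≤ (x ⬝ᵥ x).re := by
    have := (abs_le.1 ((Complex.abs_re_le_norm _).trans hclose)).1
    rw [Complex.sub_re, Complex.ofReal_re] at this
    linarith [sq_norm_le_dotProduct_self y]
  refine ⟨.inl ((by positivity : (0 : ℝ) < ‖y‖ ^ 2 / 2).trans_le hre), ?_, ?_⟩
  · refine le_trans ?_ (hre.trans (Complex.re_le_norm _))
    gcongr
    linarith [(Fintype.card ι).cast_nonneg (α := ℝ)]
  · linarith [norm_le_norm_add_norm_sub' (x ⬝ᵥ x) ((y ⬝ᵥ y : ℝ) : ℂ), sq_nonneg ‖y‖]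

/-- The function `P(x) / |x|^s`, written with the holomorphic square `x ⬝ᵥ x` in place of `|x|²`,
so that near real points it is holomorphic in `x`; it is set to `0` where `x ⬝ᵥ x = 0`. -/
def zetaSymbol (P : MvPolynomial ι ℂ) (s : ℂ) (x : ι → ℂ) : ℂ :=
  if x ⬝ᵥ x = 0 then 0 else MvPolynomial.eval x P * (x ⬝ᵥ x) ^ (-s / 2)

lemma differentiable_zetaSymbol_left (P : MvPolynomial ι ℂ) (x : ι → ℂ) :
    Differentiable ℂ (zetaSymbol P · x) := by
  by_cases hx : x ⬝ᵥ x = 0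
  · simp [zetaSymbol, hx]
  · simp only [zetaSymbol, hx, if_false]
    exact .const_mul (.const_cpow (by fun_prop) (.inl hx)) _

lemma differentiableAt_zetaSymbol (P : MvPolynomial ι ℂ) (s : ℂ) {x : ι → ℂ}
    (hx : x ⬝ᵥ x ∈ Complex.slitPlane) : DifferentiableAt ℂ (zetaSymbol P s) x := by
  have hdot : Differentiable ℂ fun x : ι → ℂ => x ⬝ᵥ x := by unfold dotProduct; fun_prop
  have hP : Differentiable ℂ fun x => MvPolynomial.eval x P := by
    simp only [MvPolynomial.eval_eq]; fun_prop
  have hne : ∀ᶠ z in 𝓝 x, z ⬝ᵥ z ≠ 0 :=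
    hdot.continuous.continuousAt.eventually_ne (Complex.slitPlane_ne_zero hx)
  refine ((hP x).mul ((hdot x).cpow_const (c := -s / 2) hx)).congr_of_eventuallyEq ?_
  filter_upwards [hne] with z hz using if_neg hz

lemma exists_norm_zetaSymbol_le_of_mem_ball (P : MvPolynomial ι ℂ) (B : ℝ) :
    ∃ δ > 0, ∃ C, ∀ s : ℂ, ‖s‖ ≤ B → ∀ y : ι → ℝ, 1 ≤ ‖y‖ →
      DifferentiableOn ℂ (zetaSymbol P s) (ball (Complex.ofReal ∘ y) (δ * ‖y‖)) ∧
      ∀ x ∈ ball (Complex.ofReal ∘ y) (δ * ‖y‖),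
        ‖zetaSymbol P s x‖ ≤ C * ‖y‖ ^ (P.totalDegree - s.re) := by
  obtain ⟨δ, hδ, A, hA, hball⟩ := exists_dotProduct_self_mem_of_mem_ball ι
  refine ⟨δ, hδ, (∑ m ∈ P.support, ‖P.coeff m‖) * (1 + δ) ^ P.totalDegree *
    (A * Real.exp Real.pi) ^ (B / 2), fun s hs y hy => ⟨fun x hx =>
      (differentiableAt_zetaSymbol P s (hball y x hx).1).differentiableWithinAt, fun x hx => ?_⟩⟩
  obtain ⟨hslit, hnorm⟩ := hball y x hx
  have hy₀ : 0 < ‖y‖ := one_pos.trans_le hy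
  have hxy : ‖x‖ ≤ (1 + δ) * ‖y‖ := by
    have := norm_le_norm_add_norm_sub' x (Complex.ofReal ∘ y)
    rw [norm_ofReal_comp] at this
    linarith [mem_ball_iff_norm.1 hx]
  have hP := norm_eval_le_of_norm_le P (r := (1 + δ) * ‖y‖) (by nlinarith)
    fun i => (norm_le_pi_norm x i).trans hxy
  have hbase : 1 ≤ A * Real.exp Real.pi := one_le_mul_of_one_le_of_one_le hA
    (Real.one_le_exp Real.pi_pos.le)
  have hpow : ‖(x ⬝ᵥ x) ^ (-s / 2)‖ ≤ (A * Real.exp Real.pi) ^ (B / 2) * ‖y‖ ^ (-s.re) := by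
    refine (norm_cpow_le_of_norm_mem_Icc _ hA (by positivity) hnorm).trans ?_
    have hre : ((2 : ℕ) : ℝ) * (-s / 2).re = -s.re := by
      rw [Complex.div_ofNat_re, Complex.neg_re]
      push_cast
      ring
    have hs₂ : ‖-s / 2‖ ≤ B / 2 := by simpa using by linarith
    rw [← Real.rpow_natCast_mul hy₀.le, hre]
    gcongr
  rw [zetaSymbol, if_neg (Complex.slitPlane_ne_zero hslit), norm_mul]
  refine (mul_le_mul hP hpow (norm_nonneg _) (by positivity)).trans_eq ?_
  rw [sub_eq_add_neg, Real.rpow_add hy₀, Real.rpow_natCast, mul_pow]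
  ring

lemma exists_norm_fwdDiff_iter_zetaSymbol_le (P : MvPolynomial ι ℂ) (v : ι → ℂ) (N : ℕ) (B : ℝ) :
    ∃ C R, ∀ s : ℂ, ‖s‖ ≤ B → ∀ y : ι → ℝ, R ≤ ‖y‖ →
      ‖(Δ_[v])^[N] (zetaSymbol P s) (Complex.ofReal ∘ y)‖ ≤
        C * ‖y‖ ^ (P.totalDegree - s.re - N) := by
  obtain ⟨δ, hδ, C, hC⟩ := exists_norm_zetaSymbol_le_of_mem_ball P B
  set ε := δ / (N + 1) with hε
  have hε₀ : 0 < ε := by positivity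
  refine ⟨C * (2 * ‖v‖ / ε) ^ N, max 1 ((‖v‖ + 1) / ε), fun s hs y hy => ?_⟩
  obtain ⟨hy₁, hyv⟩ := max_le_iff.1 hy
  have hy₀ : 0 < ‖y‖ := one_pos.trans_le hy₁
  have hv : ‖v‖ < ε * ‖y‖ := by linarith [(div_le_iff₀' hε₀).1 hyv]
  have hcenter : Complex.ofReal ∘ y ∈
      ball (Complex.ofReal ∘ y) (δ * ‖y‖ - N * (ε * ‖y‖)) := by
    have : δ * ‖y‖ - N * (ε * ‖y‖) = ε * ‖y‖ := by simp only [hε]; field_simp; ring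
    rw [this]
    exact mem_ball_self (by positivity)
  calc ‖(Δ_[v])^[N] (zetaSymbol P s) (Complex.ofReal ∘ y)‖
      ≤ C * ‖y‖ ^ (P.totalDegree - s.re) * (2 * ‖v‖ / (ε * ‖y‖)) ^ N :=
        norm_fwdDiff_iter_le_of_forall_mem_ball N (hC s hs y hy₁).1 (hC s hs y hy₁).2 hv hcenter
    _ = C * (2 * ‖v‖ / ε) ^ N * ‖y‖ ^ (P.totalDegree - s.re - N) := by
        rw [Real.rpow_sub hy₀ _ (N : ℝ), Real.rpow_natCast, ← div_div, div_pow _ ‖y‖]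
        ring

end Symbol

section ZetaSeries

variable {ι : Type*} [Fintype ι]

theorem summableLocallyUniformlyOn_smul_fwdDiff_iter_zetaSymbol (P : MvPolynomial ι ℂ)
    (χ : AddChar (ι → ℤ) ℂ) (hχ : ∀ k, ‖χ k‖ = 1) (v : ι → ℤ) (N : ℕ) :
    SummableLocallyUniformlyOn
      (fun k s => χ k • (Δ_[v])^[N] (fun l => zetaSymbol P s fun i => l i) k)
      {s | P.totalDegree + Fintype.card ι - N < s.re} := by
  refine .of_locally_bounded_eventually (isOpen_lt (by fun_prop) (by fun_prop)) fun K hK hKc => ?_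
  obtain ⟨B, hB⟩ := hKc.isBounded.exists_norm_le
  obtain ⟨σ, hσ, hKσ⟩ := hKc.exists_forall_le' Complex.continuous_re.continuousOn hK
  obtain ⟨C, R, hC⟩ := exists_norm_fwdDiff_iter_zetaSymbol_le P (fun i => v i) N B
  set φ := (Int.castAddHom ℂ).compLeft ι
  refine ⟨fun k => |C| * ‖k‖ ^ (P.totalDegree - σ - N),
    (summable_norm_rpow_int_pi (by linarith)).mul_left _, ?_⟩
  filter_upwards [tendsto_norm_int_pi_cofinite_atTop.eventually_ge_atTop (max 1 R)] with k hk s hs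
  obtain ⟨hk₁, hkR⟩ := max_le_iff.1 hk
  rw [norm_smul, hχ, one_mul]
  calc ‖(Δ_[v])^[N] (fun l => zetaSymbol P s fun i => l i) k‖
      = ‖(Δ_[φ v])^[N] (zetaSymbol P s) (φ k)‖ :=
        congrArg _ (fwdDiff_iter_comp_addMonoidHom φ (zetaSymbol P s) v N k)
    _ ≤ C * ‖k‖ ^ (P.totalDegree - s.re - N) := by
        rw [← norm_intCast_comp] at hkR ⊢
        exact hC s (hB s hs) (fun i => k i) hkR
    _ ≤ |C| * ‖k‖ ^ (P.totalDegree - σ - N) := by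
        gcongr
        exacts [le_abs_self C, hKσ s hs]

lemma znorm_cpow {n : ℕ} (k : Fin n → ℤ) (s : ℂ) :
    (znorm k : ℂ) ^ s = ((fun i => (k i : ℂ)) ⬝ᵥ fun i => (k i : ℂ)) ^ (s / 2) := by
  have hsq : ((fun i => (k i : ℂ)) ⬝ᵥ fun i => (k i : ℂ)) = (znorm k : ℂ) ^ 2 := by
    rw [znorm, ← Complex.ofReal_pow, Real.sq_sqrt (by positivity)]
    simp [dotProduct, sq]
  have harg : (znorm k : ℂ).arg = 0 := Complex.arg_ofReal_of_nonneg (Real.sqrt_nonneg _)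
  rw [hsq, ← Complex.cpow_ofNat_mul' (by simp [harg, Real.pi_pos])
    (by simp [harg, Real.pi_pos.le]), mul_div_cancel₀ s two_ne_zero]

lemma fTerm_eq_latticeChar_smul_zetaSymbol {n : ℕ} (P : MvPolynomial (Fin n) ℂ)
    (a : Fin n → ℝ) (s : ℂ) (k : Fin n → ℤ) :
    fTerm P a s k = latticeChar a k • zetaSymbol P s fun i => k i := by
  have hzero : ((fun i => (k i : ℂ)) ⬝ᵥ fun i => (k i : ℂ)) = 0 ↔ k = 0 := by
    rw [← dotProduct_self_eq_zero (v := k), ← Int.cast_eq_zero (α := ℂ)]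
    simp [dotProduct]
  have hchar : latticeChar a k = Complex.exp (2 * (Real.pi : ℂ) * Complex.I *
      ((∑ i, (k i : ℝ) * a i : ℝ) : ℂ)) := by
    simp only [latticeChar, AddChar.coe_mk, Real.fourierChar_apply]
    push_cast
    ring_nf
  rw [fTerm, zetaSymbol, hchar, znorm_cpow]
  simp only [hzero]
  split_ifs
  · simp
  · rw [neg_div, Complex.cpow_neg, smul_eq_mul, ← div_eq_mul_inv, mul_comm]

theorem fa_entire_general {n : ℕ} (P : MvPolynomial (Fin n) ℂ) {a : Fin n → ℝ}
    (ha : ¬ ∀ i, ∃ m : ℤ, a i = (m : ℝ)) :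
    ∃ g : ℂ → ℂ, Differentiable ℂ g ∧
      ∀ s : ℂ, (P.totalDegree : ℝ) + n < s.re → HasSum (fTerm P a s) (g s) := by
  obtain ⟨v, hv⟩ := exists_latticeChar_ne_one ha
  obtain ⟨g, hg, hsum⟩ := exists_differentiable_hasSum_addChar_smul (latticeChar a) hv
    (fun k => differentiable_zetaSymbol_left P fun i => k i)
    (summableLocallyUniformlyOn_smul_fwdDiff_iter_zetaSymbol P _ (norm_latticeChar a) v)
  refine ⟨g, hg, fun s hs => ?_⟩
  rw [funext (fTerm_eq_latticeChar_smul_zetaSymbol P a s)]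
  exact hsum s (by simpa using hs)

end ZetaSeries

/-- **Theorem.** If `P` is homogeneous of degree `d` and `a ∈ ℝⁿ ∖ ℤⁿ`, then
`f_a(s) = Σ'_{k∈ℤⁿ} (P(k)/|k|^s) e^{2πi k·a}` (convergent for `Re s > d + n`)
extends holomorphically to the whole complex plane. -/
theorem fa_entire (n : ℕ) (d : ℕ) (P : MvPolynomial (Fin n) ℂ) (hP : P.IsHomogeneous d)
    (a : Fin n → ℝ) (ha : ¬ ∀ i, ∃ m : ℤ, a i = (m : ℝ)) :
    ∃ g : ℂ → ℂ, Differentiable ℂ g ∧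
      ∀ s : ℂ, (d : ℝ) + (n : ℝ) < s.re → HasSum (fTerm P a s) (g s) := by
  obtain ⟨g, hg, hsum⟩ := fa_entire_general P ha
  exact ⟨g, hg, fun s hs => hsum s (by grw [hP.totalDegree_le]; exact hs)⟩

end
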